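/- arXiv:1611.06444 — 2 statements merged into one kernel-verified Lean document; each statement's English description precedes it below -/
import Mathlib

section
/- Let Γ be a strongly connected digraph on vertices {1,…,n}, let S = S(Γ) be its total sandpile group, and let S_i = S_i(Γ) be its sandpile groups at the vertices. Then for every i ∈ {1,…,n} there exists a surjective group homomorphism S_i → S, and |S| = gcd(|S_1|, …, |S_n|). -/
open Matrix

noncomputable section

/-- The Laplacian of the digraph on `Fin n` with edge multiplicities `d i j ∈ ℕ`:
`L i j = -d i j` for `i ≠ j` and `L i i = outdeg i - d i i = ∑_{k ≠ i} d i k`. -/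
def digraphLaplacian {n : ℕ} (d : Fin n → Fin n → ℕ) : Matrix (Fin n) (Fin n) ℤ :=
  Matrix.of fun i j => if i = j then ∑ k ∈ Finset.univ.erase i, (d i k : ℤ) else -(d i j : ℤ)

/-- `ℤ₀ⁿ`: the submodule of `ℤⁿ` of vectors whose coordinates sum to zero. -/
def zeroSum (n : ℕ) : Submodule ℤ (Fin n → ℤ) where
  carrier := {v | ∑ i, v i = 0}
  add_mem' := by
    intro x y hx hy
    simp only [Set.mem_setOf_eq, Pi.add_apply, Finset.sum_add_distrib] at *
    rw [hx, hy, add_zero]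
  zero_mem' := by simp
  smul_mem' := by
    intro c x hx
    simp only [Set.mem_setOf_eq, Pi.smul_apply, smul_eq_mul, ← Finset.mul_sum] at *
    rw [hx, mul_zero]

/-- The total sandpile group `S(Γ) = ℤ₀ⁿ / L(Γ)ℤⁿ`, where the Laplacian acts on row
vectors (so that its image lies in `ℤ₀ⁿ`). -/
abbrev totalSandpile {n : ℕ} (d : Fin n → Fin n → ℕ) : Type :=
  zeroSum n ⧸ Submodule.comap (zeroSum n).subtype
    (LinearMap.range (Matrix.mulVecLin (digraphLaplacian d)ᵀ))

/-- The sandpile group at the vertex `i`: `S_i(Γ) = ℤ^{n-1} / L_i ℤ^{n-1}`, where `L_i` is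
the Laplacian with the `i`-th row and column removed. -/
abbrev vertexSandpile {n : ℕ} (d : Fin (n + 1) → Fin (n + 1) → ℕ) (i : Fin (n + 1)) : Type :=
  (Fin n → ℤ) ⧸ LinearMap.range
    (Matrix.mulVecLin ((digraphLaplacian d).submatrix i.succAbove i.succAbove)ᵀ)

/-- A digraph with edge multiplicities `d` is strongly connected if any vertex can be
reached from any other through edges of positive multiplicity. -/
def StronglyConnected {n : ℕ} (d : Fin n → Fin n → ℕ) : Prop :=
  ∀ i j : Fin n, Relation.ReflTransGen (fun u v => 0 < d u v) i j

section Laplacian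

variable {m : ℕ} (d : Fin m → Fin m → ℕ)

lemma digraphLaplacian_transpose_mulVec_apply (x : Fin m → ℤ) (j : Fin m) :
    ((digraphLaplacian d)ᵀ *ᵥ x) j =
      (∑ k ∈ Finset.univ.erase j, (d j k : ℤ)) * x j -
        ∑ k ∈ Finset.univ.erase j, (d k j : ℤ) * x k := by
  rw [Matrix.mulVec, dotProduct, ← Finset.add_sum_erase _ _ (Finset.mem_univ j), sub_eq_add_neg,
    ← Finset.sum_neg_distrib]
  congr 1
  · simp [digraphLaplacian]
  · refine Finset.sum_congr rfl fun k hk => ?_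
    simp [digraphLaplacian, Finset.ne_of_mem_erase hk]

lemma digraphLaplacian_mulVec_one : digraphLaplacian d *ᵥ 1 = 0 := by
  ext i
  rw [Matrix.mulVec, dotProduct, ← Finset.add_sum_erase _ _ (Finset.mem_univ i),
    Finset.sum_congr rfl (g := fun k => -(d i k : ℤ)) fun k hk => by
      simp [digraphLaplacian, (Finset.ne_of_mem_erase hk).symm]]
  simp [digraphLaplacian]

lemma sum_digraphLaplacian_transpose_mulVec (x : Fin m → ℤ) :
    ∑ j, ((digraphLaplacian d)ᵀ *ᵥ x) j = 0 := by
  rw [← one_dotProduct, Matrix.dotProduct_mulVec, Matrix.vecMul_transpose,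
    digraphLaplacian_mulVec_one, zero_dotProduct]

variable {d}

lemma digraphLaplacian_transpose_mulVec_abs {w : Fin m → ℤ}
    (hw : (digraphLaplacian d)ᵀ *ᵥ w = 0) : (digraphLaplacian d)ᵀ *ᵥ |w| = 0 := by
  have hle : ∀ j ∈ Finset.univ, ((digraphLaplacian d)ᵀ *ᵥ |w|) j ≤ 0 := by
    intro j _
    have hj := congrFun hw j
    rw [digraphLaplacian_transpose_mulVec_apply, Pi.zero_apply, sub_eq_zero] at hj
    rw [digraphLaplacian_transpose_mulVec_apply, sub_nonpos]
    calc (∑ k ∈ Finset.univ.erase j, (d j k : ℤ)) * |w j|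
        = |(∑ k ∈ Finset.univ.erase j, (d j k : ℤ)) * w j| := by
          rw [abs_mul, abs_of_nonneg (Finset.sum_nonneg fun k _ => Int.natCast_nonneg _)]
      _ = |∑ k ∈ Finset.univ.erase j, (d k j : ℤ) * w k| := by rw [hj]
      _ ≤ ∑ k ∈ Finset.univ.erase j, |(d k j : ℤ) * w k| := Finset.abs_sum_le_sum_abs _ _
      _ = ∑ k ∈ Finset.univ.erase j, (d k j : ℤ) * |w| k := by simp [abs_mul]
  ext j
  exact (Finset.sum_eq_zero_iff_of_nonpos hle).1
    (sum_digraphLaplacian_transpose_mulVec d |w|) j (Finset.mem_univ j)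

lemma StronglyConnected.eq_zero_of_apply_eq_zero (hconn : StronglyConnected d) {w : Fin m → ℤ}
    (hw : (digraphLaplacian d)ᵀ *ᵥ w = 0) {j : Fin m} (hj : w j = 0) : w = 0 := by
  ext i
  refine (hconn i j).head_induction_on hj fun {u v} huv _ hv => ?_
  by_cases hne : u = v
  · exact hne ▸ hv
  have h := congrFun (digraphLaplacian_transpose_mulVec_abs hw) v
  simp only [digraphLaplacian_transpose_mulVec_apply, Pi.abs_apply, hv, Pi.zero_apply, abs_zero,
    mul_zero, zero_sub, neg_eq_zero] at h
  have hu := (Finset.sum_eq_zero_iff_of_nonneg fun k _ => by positivity).1 h u (by simp [hne])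
  simpa [huv.ne'] using hu

/-- The left kernel of the Laplacian of a strongly connected digraph contains a primitive vector
whose coordinates divide the corresponding coordinates of every vector of the kernel. -/
lemma StronglyConnected.exists_primitive_kernel_vector [NeZero m] (hconn : StronglyConnected d) :
    ∃ p : Fin m → ℤ, (digraphLaplacian d)ᵀ *ᵥ p = 0 ∧ Finset.univ.gcd p = 1 ∧
      ∀ w, (digraphLaplacian d)ᵀ *ᵥ w = 0 → ∀ i, p i ∣ w i := by
  have hdet : (digraphLaplacian d)ᵀ.det = 0 := by
    rw [Matrix.det_transpose]
    exact Matrix.exists_mulVec_eq_zero_iff.1 ⟨1, one_ne_zero, digraphLaplacian_mulVec_one d⟩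
  obtain ⟨v, hv0, hv⟩ := Matrix.exists_mulVec_eq_zero_iff.2 hdet
  obtain ⟨p, hp, hgcd⟩ := Finset.univ.extract_gcd v Finset.univ_nonempty
  have hvp : v = Finset.univ.gcd v • p := funext fun i => hp i (Finset.mem_univ i)
  have hg : Finset.univ.gcd v ≠ 0 := fun h => hv0 (by rw [hvp, h, zero_smul])
  have hpker : (digraphLaplacian d)ᵀ *ᵥ p = 0 := by
    rw [hvp, Matrix.mulVec_smul] at hv
    exact (smul_eq_zero.1 hv).resolve_left hg
  refine ⟨p, hpker, hgcd, fun w hw i => ?_⟩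
  have hprop : p i • w - w i • p = 0 := by
    refine hconn.eq_zero_of_apply_eq_zero (j := i) ?_ (by simp [mul_comm])
    rw [Matrix.mulVec_sub, Matrix.mulVec_smul, Matrix.mulVec_smul, hw, hpker]
    simp
  have hdvd : p i ∣ Finset.univ.gcd fun j => w i * p j :=
    Finset.dvd_gcd fun j _ => ⟨w j, by
      simpa [sub_eq_zero, eq_comm] using congrFun hprop j⟩
  rwa [Finset.gcd_mul_left, hgcd, mul_one, dvd_normalize_iff] at hdvd

end Laplacian

section Sandpile

variable {n : ℕ}

/-- Forgetting the `i`-th coordinate identifies `ℤ₀ⁿ⁺¹` with `ℤⁿ`. -/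
def zeroSumEquiv (i : Fin (n + 1)) : zeroSum (n + 1) ≃ₗ[ℤ] (Fin n → ℤ) :=
  LinearEquiv.ofBijective
    ((LinearMap.funLeft ℤ ℤ i.succAbove).comp (zeroSum (n + 1)).subtype) <| by
    constructor
    · rw [← LinearMap.ker_eq_bot, LinearMap.ker_eq_bot']
      intro v hv
      have hs : ∀ k, v.1 (i.succAbove k) = 0 := fun k => congrFun hv k
      have hsum : ∑ j, v.1 j = 0 := v.2
      rw [Fin.sum_univ_succAbove _ i] at hsum
      ext j
      rcases Fin.eq_self_or_eq_succAbove i j with rfl | ⟨k, rfl⟩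
      · simpa [hs] using hsum
      · exact hs k
    · intro x
      refine ⟨⟨i.insertNth (-∑ k, x k) x, ?_⟩, ?_⟩
      · change ∑ j, _ = 0
        simp [Fin.sum_univ_succAbove _ i]
      · ext k
        simp [LinearMap.funLeft]

variable (d : Fin (n + 1) → Fin (n + 1) → ℕ) (i : Fin (n + 1))

/-- The transposed Laplacian followed by forgetting the `i`-th coordinate. -/
def truncatedLaplacian : (Fin (n + 1) → ℤ) →ₗ[ℤ] (Fin n → ℤ) :=
  (LinearMap.funLeft ℤ ℤ i.succAbove).comp (Matrix.mulVecLin (digraphLaplacian d)ᵀ)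

variable {d i} in
lemma truncatedLaplacian_eq_zero_iff {x : Fin (n + 1) → ℤ} :
    truncatedLaplacian d i x = 0 ↔ (digraphLaplacian d)ᵀ *ᵥ x = 0 := by
  let v : zeroSum (n + 1) :=
    ⟨(digraphLaplacian d)ᵀ *ᵥ x, sum_digraphLaplacian_transpose_mulVec d x⟩
  change zeroSumEquiv i v = 0 ↔ v.1 = 0
  simp

lemma map_zeroSumEquiv :
    (Submodule.comap (zeroSum (n + 1)).subtype
      (LinearMap.range (Matrix.mulVecLin (digraphLaplacian d)ᵀ))).map
        (zeroSumEquiv i : zeroSum (n + 1) →ₗ[ℤ] (Fin n → ℤ)) =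
      LinearMap.range (truncatedLaplacian d i) := by
  ext y
  constructor
  · rintro ⟨v, ⟨x, hx⟩, rfl⟩
    exact ⟨x, congrArg (LinearMap.funLeft ℤ ℤ i.succAbove) hx⟩
  · rintro ⟨x, rfl⟩
    exact ⟨⟨_, sum_digraphLaplacian_transpose_mulVec d x⟩, ⟨x, rfl⟩, rfl⟩

/-- The total sandpile group as a quotient of `ℤⁿ`. -/
def totalSandpileEquiv :
    totalSandpile d ≃ₗ[ℤ] (Fin n → ℤ) ⧸ LinearMap.range (truncatedLaplacian d i) :=
  Submodule.Quotient.equiv _ _ (zeroSumEquiv i) (map_zeroSumEquiv d i)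

variable {i} in
lemma truncatedLaplacian_of_apply_eq_zero {x : Fin (n + 1) → ℤ} (hx : x i = 0) :
    truncatedLaplacian d i x =
      ((digraphLaplacian d).submatrix i.succAbove i.succAbove)ᵀ *ᵥ (x ∘ i.succAbove) := by
  ext k
  simp only [truncatedLaplacian, LinearMap.comp_apply, LinearMap.funLeft_apply,
    Matrix.mulVecLin_apply, Matrix.mulVec, dotProduct]
  simp [Fin.sum_univ_succAbove _ i, hx]

lemma range_submatrix_eq_map :
    LinearMap.range
        (Matrix.mulVecLin ((digraphLaplacian d).submatrix i.succAbove i.succAbove)ᵀ) =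
      (LinearMap.ker (LinearMap.proj (R := ℤ) (φ := fun _ => ℤ) i)).map
        (truncatedLaplacian d i) := by
  ext y
  constructor
  · rintro ⟨x, rfl⟩
    refine ⟨i.insertNth 0 x, by simp, ?_⟩
    rw [truncatedLaplacian_of_apply_eq_zero d (by simp)]
    congr 1
    ext k
    simp
  · rintro ⟨x, hx, rfl⟩
    exact ⟨_, (truncatedLaplacian_of_apply_eq_zero d hx).symm⟩

lemma range_submatrix_le :
    LinearMap.range
        (Matrix.mulVecLin ((digraphLaplacian d).submatrix i.succAbove i.succAbove)ᵀ) ≤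
      LinearMap.range (truncatedLaplacian d i) := by
  rw [range_submatrix_eq_map]
  exact LinearMap.map_le_range

lemma exists_surjective_vertexSandpile_totalSandpile :
    ∃ f : vertexSandpile d i →+ totalSandpile d, Function.Surjective f :=
  ⟨((totalSandpileEquiv d i).symm.toLinearMap.comp
      (Submodule.factor (range_submatrix_le d i))).toAddMonoidHom,
    (totalSandpileEquiv d i).symm.surjective.comp (Submodule.factor_surjective _)⟩

variable {d} in
lemma card_vertexSandpile {p : Fin (n + 1) → ℤ} (hp : (digraphLaplacian d)ᵀ *ᵥ p = 0)
    (hdvd : ∀ w, (digraphLaplacian d)ᵀ *ᵥ w = 0 → p i ∣ w i) :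
    Nat.card (vertexSandpile d i) = Nat.card (totalSandpile d) * (p i).natAbs := by
  have hcomap : (LinearMap.range (Matrix.mulVecLin
      ((digraphLaplacian d).submatrix i.succAbove i.succAbove)ᵀ)).toAddSubgroup.comap
        (truncatedLaplacian d i).toAddMonoidHom =
      (AddSubgroup.zmultiples (p i)).comap (Pi.evalAddMonoidHom (fun _ => ℤ) i) := by
    ext x
    rw [range_submatrix_eq_map, AddSubgroup.mem_comap, AddSubgroup.mem_comap,
      Int.mem_zmultiples_iff]
    constructor
    · rintro ⟨y, hy, hyx⟩
      have hy : y i = 0 := hy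
      have h := hdvd (x - y) ((truncatedLaplacian_eq_zero_iff (i := i)).1 (by
        rw [map_sub, sub_eq_zero]
        exact hyx.symm))
      simpa [hy] using h
    · rintro ⟨c, hc⟩
      have hc : x i = p i * c := hc
      refine ⟨x - c • p, by simp [hc, mul_comm], ?_⟩
      change truncatedLaplacian d i (x - c • p) = truncatedLaplacian d i x
      rw [map_sub, map_smul, truncatedLaplacian_eq_zero_iff.2 hp, smul_zero, sub_zero]
  have hrel : (LinearMap.range (Matrix.mulVecLin ((digraphLaplacian d).submatrix i.succAbove
      i.succAbove)ᵀ)).toAddSubgroup.relIndex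
        (LinearMap.range (truncatedLaplacian d i)).toAddSubgroup = (p i).natAbs := by
    have hrange : (LinearMap.range (truncatedLaplacian d i)).toAddSubgroup =
        AddSubgroup.map (truncatedLaplacian d i).toAddMonoidHom ⊤ := by
      ext y
      simp
    rw [hrange, ← AddSubgroup.relIndex_comap, hcomap, AddSubgroup.relIndex_top_right,
      AddSubgroup.index_comap_of_surjective _ (Function.surjective_eval i),
      Int.index_zmultiples]
  rw [Nat.card_congr (totalSandpileEquiv d i).toEquiv, mul_comm, ← hrel]
  exact (AddSubgroup.relIndex_mul_index
    (Submodule.toAddSubgroup_mono (range_submatrix_le d i))).symm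

end Sandpile

lemma Finset.gcd_natAbs {ι : Type*} (s : Finset ι) (p : ι → ℤ) :
    s.gcd (fun i => (p i).natAbs) = (s.gcd p).natAbs := by
  refine Nat.dvd_antisymm ?_ (Finset.dvd_gcd fun i hi => Int.natAbs_dvd_natAbs.2
    (Finset.gcd_dvd hi))
  rw [← Int.natCast_dvd]
  exact Finset.dvd_gcd fun i hi => Int.natCast_dvd.2 (Finset.gcd_dvd hi)

/-- For a strongly connected digraph, each sandpile group `S_i` surjects onto the total
sandpile group `S`, and `|S| = gcd(|S_1|, …, |S_n|)`. -/
theorem total_sandpile_surjection_and_card_gcd {n : ℕ}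
    (d : Fin (n + 1) → Fin (n + 1) → ℕ) (hconn : StronglyConnected d) :
    (∀ i : Fin (n + 1), ∃ f : vertexSandpile d i →+ totalSandpile d, Function.Surjective f) ∧
      Nat.card (totalSandpile d) =
        Finset.univ.gcd (fun i : Fin (n + 1) => Nat.card (vertexSandpile d i)) := by
  refine ⟨exists_surjective_vertexSandpile_totalSandpile d, ?_⟩
  obtain ⟨p, hp, hgcd, hdvd⟩ := hconn.exists_primitive_kernel_vector
  rw [Finset.gcd_congr rfl fun i _ => card_vertexSandpile i hp fun w hw => hdvd w hw i,
    Finset.gcd_mul_left, Finset.gcd_natAbs, hgcd]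
  simp

end
end

section
/- Let G be a finite abelian group. Then ∑_H (Q / (|H| · |Aut(H)|)) · #Sur(H, G) = 1/|G|, where the sum runs over isomorphism classes of finite abelian groups H, Q = ∏_{p prime} ∏_{k=2}^∞ (1 − p^{−k}), Aut(H) is the automorphism group of H, and #Sur(H,G) is the number of surjective group homomorphisms from H to G. Equivalently, if Y is a random finite abelian group with P(Y ≅ H) = Q/(|H||Aut(H)|) for every finite abelian group H, then E[#Sur(Y, G)] = 1/|G|. -/
noncomputable section

/-- The number of surjective additive homomorphisms from `A` to `B`. -/
def nSur (A B : Type*) [AddCommGroup A] [AddCommGroup B] : ℕ :=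
  Nat.card {f : A →+ B // Function.Surjective f}

/-- `Q_p = ∏_{k=2}^∞ (1 - p^{-k})`. -/
def Qp (p : ℕ) : ℝ := ∏' k : ℕ, (1 - ((p : ℝ) ^ (k + 2))⁻¹)

/-- `Q = ∏_p Q_p`. -/
def Qconst : ℝ := ∏' p : Nat.Primes, Qp p

open Filter Topology
open scoped NNReal ENNReal

section Euler

/-- The weight `k⁻ˢ`, with the convention that `0` has weight `0` when `s ≠ 0`. -/
def invPow (k s : ℕ) : ℝ≥0∞ := (((k : ℝ≥0)⁻¹ ^ s : ℝ≥0) : ℝ≥0∞)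

/-- The value `ζ(s) = ∑ d⁻ˢ` as an extended nonnegative real. -/
def natZeta (s : ℕ) : ℝ≥0∞ := ∑' d : ℕ, invPow d s

lemma summable_prime_inv_pow :
    Summable fun x : Nat.Primes × ℕ => ‖-((x.1 : ℝ) ^ (x.2 + 2))⁻¹‖ := by
  have h1 : Summable fun p : Nat.Primes => ((p : ℝ) ^ 2)⁻¹ :=
    (Real.summable_nat_pow_inv.2 one_lt_two).comp_injective Nat.Primes.coe_nat_injective
  have h2 : Summable fun k : ℕ => ((1 : ℝ) / 2) ^ k :=
    summable_geometric_of_lt_one (by norm_num) (by norm_num)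
  refine (h1.mul_of_nonneg h2 (fun _ => by positivity) (fun _ => by positivity)).of_nonneg_of_le
    (fun _ => norm_nonneg _) fun ⟨p, k⟩ => ?_
  have hp : (2 : ℝ) ≤ p := by exact_mod_cast p.2.two_le
  have : ((p : ℝ) ^ k)⁻¹ ≤ (1 / 2) ^ k := by
    rw [one_div, inv_pow]
    gcongr
  rw [norm_neg, Real.norm_of_nonneg (by positivity), pow_add, mul_inv, mul_comm]
  gcongr

lemma prime_factor_ne_zero (p : Nat.Primes) (k : ℕ) :
    1 + -((p : ℝ) ^ (k + 2))⁻¹ ≠ 0 := by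
  have hp : (1 : ℝ) < p := by exact_mod_cast p.2.one_lt
  have := inv_lt_one_of_one_lt₀ (one_lt_pow₀ hp (n := k + 2) (by omega))
  linarith

lemma hasProd_prime_factor (k : ℕ) :
    HasProd (fun p : Nat.Primes => 1 + -((p : ℝ) ^ (k + 2))⁻¹)
      (∑' n : ℕ, ((n : ℝ) ^ (k + 2))⁻¹)⁻¹ := by
  let f : ℕ →*₀ ℝ :=
    { toFun := fun n => ((n : ℝ) ^ (k + 2))⁻¹
      map_zero' := by simp
      map_one' := by simp
      map_mul' := fun a b => by simp [mul_pow, mul_comm] }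
  have hs : Summable fun n : ℕ => ((n : ℝ) ^ (k + 2))⁻¹ :=
    Real.summable_nat_pow_inv.2 (by omega)
  have h : HasProd (fun p : Nat.Primes => (1 - f p)⁻¹) (∑' n : ℕ, ((n : ℝ) ^ (k + 2))⁻¹) :=
    EulerProduct.eulerProduct_completely_multiplicative_hasProd (f := f) hs.norm
  have hm : Multipliable fun p : Nat.Primes => 1 + -((p : ℝ) ^ (k + 2))⁻¹ :=
    multipliable_one_add_of_summable (summable_prime_inv_pow.prod_symm.prod_factor k)
  have hone : (fun p : Nat.Primes => (1 - f p)⁻¹ * (1 + -((p : ℝ) ^ (k + 2))⁻¹)) = fun _ => 1 :=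
    funext fun p => by
      rw [← sub_eq_add_neg]
      exact inv_mul_cancel₀ (by simpa [f, sub_eq_add_neg] using prime_factor_ne_zero p k)
  have h1 := h.mul hm.hasProd
  rw [hone] at h1
  rw [inv_eq_of_mul_eq_one_right (h1.unique hasProd_one)]
  exact hm.hasProd

lemma hasProd_prod_Qconst :
    HasProd (fun x : Nat.Primes × ℕ => 1 + -((x.1 : ℝ) ^ (x.2 + 2))⁻¹) Qconst := by
  have hm : Multipliable fun x : Nat.Primes × ℕ => 1 + -((x.1 : ℝ) ^ (x.2 + 2))⁻¹ :=
    multipliable_one_add_of_summable summable_prime_inv_pow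
  have hQ : ∏' x : Nat.Primes × ℕ, (1 + -((x.1 : ℝ) ^ (x.2 + 2))⁻¹) = Qconst :=
    hm.tprod_prod' fun p =>
      multipliable_one_add_of_summable (summable_prime_inv_pow.prod_factor p)
  exact hQ ▸ hm.hasProd

lemma hasProd_Qconst :
    HasProd (fun k : ℕ => (∑' n : ℕ, ((n : ℝ) ^ (k + 2))⁻¹)⁻¹) Qconst := by
  exact ((Equiv.prodComm ℕ Nat.Primes).hasProd_iff.2 hasProd_prod_Qconst).prod_fiberwise
    hasProd_prime_factor

lemma Qconst_ne_zero : Qconst ≠ 0 := by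
  rw [← hasProd_prod_Qconst.tprod_eq]
  exact tprod_one_add_ne_zero_of_summable (fun x => prime_factor_ne_zero x.1 x.2)
    summable_prime_inv_pow

lemma Qconst_nonneg : 0 ≤ Qconst :=
  ge_of_tendsto' hasProd_Qconst.tendsto_prod_nat fun n =>
    Finset.prod_nonneg fun k _ => inv_nonneg.2 (tsum_nonneg fun _ => by positivity)

lemma natZeta_eq_ofReal (k : ℕ) :
    natZeta (k + 2) = ENNReal.ofReal (∑' n : ℕ, ((n : ℝ) ^ (k + 2))⁻¹) := by
  rw [ENNReal.ofReal_tsum_of_nonneg (fun _ => by positivity)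
    (Real.summable_nat_pow_inv.2 (by omega))]
  refine tsum_congr fun n => ?_
  rw [invPow, ENNReal.ofReal, ENNReal.coe_inj]
  ext
  rw [Real.coe_toNNReal _ (by positivity)]
  simp

lemma tendsto_prod_natZeta :
    Tendsto (fun n => ∏ k ∈ Finset.range n, natZeta (k + 2)) atTop
      (𝓝 (ENNReal.ofReal Qconst⁻¹)) := by
  have h := (ENNReal.continuous_ofReal.tendsto _).comp
    (hasProd_Qconst.tendsto_prod_nat.inv₀ Qconst_ne_zero)
  refine h.congr fun n => ?_
  rw [Function.comp_apply, Finset.prod_inv_distrib, inv_inv,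
    ENNReal.ofReal_prod_of_nonneg fun _ _ => tsum_nonneg fun _ => by positivity]
  exact Finset.prod_congr rfl fun k _ => (natZeta_eq_ofReal k).symm

end Euler

section SubgroupZeta

lemma invPow_mul (k l s : ℕ) : invPow (k * l) s = invPow k s * invPow l s := by
  simp only [invPow, Nat.cast_mul, mul_inv, mul_pow, ENNReal.coe_mul]

lemma invPow_zero_left {s : ℕ} (hs : s ≠ 0) : invPow 0 s = 0 := by simp [invPow, hs]

lemma invPow_of_ne_zero {k : ℕ} (hk : k ≠ 0) (s : ℕ) : invPow k s = (k : ℝ≥0∞)⁻¹ ^ s := by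
  rw [invPow, ENNReal.coe_pow, ENNReal.coe_inv (by exact_mod_cast hk), ENNReal.coe_natCast]

/-- The zeta function `∑ [A : L]⁻ˢ` counting the finite index subgroups of `A`. -/
def subgroupZeta (A : Type*) [AddCommGroup A] (s : ℕ) : ℝ≥0∞ :=
  ∑' L : AddSubgroup A, invPow L.index s

lemma subgroupZeta_congr {A B : Type*} [AddCommGroup A] [AddCommGroup B] (e : A ≃+ B) (s : ℕ) :
    subgroupZeta A s = subgroupZeta B s := by
  rw [subgroupZeta, subgroupZeta, ← e.mapAddSubgroup.toEquiv.tsum_eq]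
  refine tsum_congr fun L => ?_
  congr 1
  exact (AddSubgroup.index_map_equiv L e).symm

lemma subgroupZeta_of_subsingleton (A : Type*) [AddCommGroup A] [Subsingleton A] (s : ℕ) :
    subgroupZeta A s = 1 := by
  rw [subgroupZeta, tsum_eq_single ⊥ fun L hL => (hL (Subsingleton.elim _ _)).elim]
  simp [invPow]

/-- The sum over the subgroups contained in a finite index subgroup `K`. -/
lemma tsum_le_invPow_index {A : Type*} [AddCommGroup A] (K : AddSubgroup A) (s : ℕ) :
    ∑' L : {L : AddSubgroup A // L ≤ K}, invPow L.1.index s =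
      invPow K.index s * subgroupZeta K s := by
  rw [subgroupZeta, ← ENNReal.tsum_mul_left]
  let e : AddSubgroup K ≃ {L : AddSubgroup A // L ≤ K} :=
    { toFun := fun M => ⟨M.map K.subtype, AddSubgroup.map_subtype_le M⟩
      invFun := fun L => L.1.addSubgroupOf K
      left_inv := fun M => AddSubgroup.comap_map_eq_self_of_injective K.subtype_injective M
      right_inv := fun L => Subtype.ext (AddSubgroup.map_addSubgroupOf_eq_of_le L.2) }
  rw [← e.tsum_eq]
  refine tsum_congr fun M => ?_
  rw [mul_comm, ← invPow_mul]
  congr 1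
  exact AddSubgroup.index_map_subtype M

variable {A : Type*} [AddCommGroup A]

/-- The subgroup of `A × ℤ` generated by `L × 0` and `(v, d)`. -/
def extendSubgroup (L : AddSubgroup A) (d : ℕ) (v : A ⧸ L) : AddSubgroup (A × ℤ) :=
  ((QuotientAddGroup.mk' L).comp (AddMonoidHom.fst A ℤ) -
    (zmultiplesHom (A ⧸ L) v).comp (AddMonoidHom.snd A ℤ)).ker.map
    ((AddMonoidHom.id A).prodMap (AddMonoidHom.mulLeft (d : ℤ)))

lemma mem_extendSubgroup {L : AddSubgroup A} {d : ℕ} {v : A ⧸ L} {x : A × ℤ} :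
    x ∈ extendSubgroup L d v ↔ ∃ k : ℤ, (x.1 : A ⧸ L) = k • v ∧ d * k = x.2 := by
  constructor
  · rintro ⟨⟨a, k⟩, h, rfl⟩
    exact ⟨k, by simpa [AddMonoidHom.mem_ker, sub_eq_zero] using h, rfl⟩
  · rintro ⟨k, h1, h2⟩
    refine ⟨(x.1, k), ?_, Prod.ext rfl h2⟩
    simpa [AddMonoidHom.mem_ker, sub_eq_zero] using h1

lemma index_extendSubgroup (L : AddSubgroup A) {d : ℕ} (hd : d ≠ 0) (v : A ⧸ L) :
    (extendSubgroup L d v).index = L.index * d := by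
  rw [extendSubgroup, AddSubgroup.index_map_of_injective]
  · congr 1
    · rw [AddSubgroup.index_ker, AddMonoidHom.range_eq_top.2, AddSubgroup.card_top]
      · rfl
      · intro q
        obtain ⟨a, rfl⟩ := QuotientAddGroup.mk_surjective q
        exact ⟨(a, 0), by simp⟩
    · have : ((AddMonoidHom.id A).prodMap (AddMonoidHom.mulLeft (d : ℤ))).range =
          (AddSubgroup.zmultiples (d : ℤ)).comap (AddMonoidHom.snd A ℤ) := by
        ext ⟨a, x⟩
        simp [AddSubgroup.mem_prod, AddSubgroup.mem_zmultiples_iff, mul_comm]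
      rw [this, AddSubgroup.index_comap_of_surjective _ fun x => ⟨(0, x), rfl⟩,
        Int.index_zmultiples, Int.natAbs_natCast]
  · rintro ⟨a, x⟩ ⟨b, y⟩ h
    simpa [hd] using h

lemma extendSubgroup_injective :
    Function.Injective fun x : (L : AddSubgroup A) × ℕ+ × (A ⧸ L) =>
      extendSubgroup x.1 x.2.1 x.2.2 := by
  rintro ⟨L, d, v⟩ ⟨L', d', v'⟩ h
  have H : ∀ (a : A) (z : ℤ), (∃ k : ℤ, (a : A ⧸ L) = k • v ∧ d * k = z) ↔
      ∃ k : ℤ, (a : A ⧸ L') = k • v' ∧ d' * k = z := fun a z => by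
    simpa only [mem_extendSubgroup] using (SetLike.ext_iff.1 h (a, z))
  have hL : L = L' := by
    ext a
    simpa using H a 0
  subst hL
  obtain ⟨a, rfl⟩ := QuotientAddGroup.mk_surjective v
  obtain ⟨a', rfl⟩ := QuotientAddGroup.mk_surjective v'
  obtain ⟨k, h1, h2⟩ := (H a d).1 ⟨1, by simp⟩
  obtain ⟨k', h1', h2'⟩ := (H a' d').2 ⟨1, by simp⟩
  have hd : d = d' := by
    refine PNat.dvd_antisymm (PNat.dvd_iff.2 ?_) (PNat.dvd_iff.2 ?_)
    · exact Int.natCast_dvd_natCast.1 ⟨k', h2'.symm⟩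
    · exact Int.natCast_dvd_natCast.1 ⟨k, h2.symm⟩
  subst hd
  have hk : k = 1 := by simpa using h2
  rw [h1, hk, one_smul]

lemma exists_extendSubgroup_eq (M : AddSubgroup (A × ℤ)) (hM : M.index ≠ 0) :
    ∃ x : (L : AddSubgroup A) × ℕ+ × (A ⧸ L), extendSubgroup x.1 x.2.1 x.2.2 = M := by
  obtain ⟨g, hg⟩ := Int.subgroup_cyclic (M.map (AddMonoidHom.snd A ℤ))
  rw [← AddSubgroup.zmultiples_eq_closure, ← Int.zmultiples_natAbs] at hg
  have hd : 0 < g.natAbs := by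
    rw [Nat.pos_iff_ne_zero]
    intro h0
    have := AddSubgroup.index_map_dvd M (f := AddMonoidHom.snd A ℤ) fun x => ⟨(0, x), rfl⟩
    rw [hg, Int.index_zmultiples, h0] at this
    exact hM (by simpa using this)
  generalize g.natAbs = d at hg hd
  obtain ⟨⟨a₀, z⟩, ha₀, hz⟩ : (d : ℤ) ∈ M.map (AddMonoidHom.snd A ℤ) :=
    hg ▸ AddSubgroup.mem_zmultiples _
  obtain rfl : z = d := hz
  refine ⟨⟨M.comap (AddMonoidHom.inl A ℤ), ⟨d, hd⟩, (a₀ : A ⧸ M.comap _)⟩, ?_⟩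
  have key : ∀ (a : A) (k : ℤ),
      (a : A ⧸ M.comap (AddMonoidHom.inl A ℤ)) = k • (a₀ : A ⧸ M.comap _) ↔
        (a, (d : ℤ) * k) ∈ M := by
    intro a k
    rw [← QuotientAddGroup.mk_zsmul, QuotientAddGroup.eq, ← neg_mem_iff, AddSubgroup.mem_comap,
      ← AddSubgroup.add_mem_cancel_right M (M.zsmul_mem ha₀ k)]
    simp [mul_comm]
  ext ⟨a, x⟩
  simp only [mem_extendSubgroup, key]
  constructor
  · rintro ⟨k, h, rfl⟩
    exact h
  · intro h
    have hx : x ∈ M.map (AddMonoidHom.snd A ℤ) := ⟨_, h, rfl⟩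
    rw [hg] at hx
    obtain ⟨k, rfl⟩ := AddSubgroup.mem_zmultiples_iff.1 hx
    rw [smul_eq_mul, mul_comm] at h
    exact ⟨k, h, by simp [mul_comm]⟩

lemma subgroupZeta_prod_int {s : ℕ} (hs : s ≠ 0) :
    subgroupZeta (A × ℤ) (s + 1) = natZeta (s + 1) * subgroupZeta A s := by
  rw [subgroupZeta, ← extendSubgroup_injective.tsum_eq]
  · rw [ENNReal.tsum_sigma', subgroupZeta, ← ENNReal.tsum_mul_left]
    refine tsum_congr fun L => ?_
    have hz : natZeta (s + 1) = ∑' d : ℕ+, invPow d (s + 1) := by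
      rw [natZeta, ← PNat.coe_injective.tsum_eq]
      intro d hd
      refine ⟨⟨d, Nat.pos_of_ne_zero ?_⟩, rfl⟩
      rintro rfl
      exact hd (invPow_zero_left s.succ_ne_zero)
    simp only [index_extendSubgroup _ (PNat.ne_zero _), invPow_mul]
    rw [ENNReal.tsum_prod (f := fun (d : ℕ+) (_ : A ⧸ L) =>
      invPow L.index (s + 1) * invPow d (s + 1))]
    simp only [ENNReal.tsum_const]
    rw [ENNReal.tsum_mul_left, ENNReal.tsum_mul_left, ← hz, ← mul_assoc, mul_comm]
    congr 1
    by_cases h0 : L.index = 0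
    · simp [h0, invPow_zero_left, hs]
    · have : L.FiniteIndex := ⟨h0⟩
      have : Finite (A ⧸ L) := AddSubgroup.finite_quotient_of_finiteIndex (H := L)
      rw [ENat.card_eq_coe_natCard, ← AddSubgroup.index_eq_card, invPow_of_ne_zero h0,
        invPow_of_ne_zero h0, pow_succ', ← mul_assoc]
      simp only [ENat.toENNReal_coe]
      rw [ENNReal.mul_inv_cancel (by exact_mod_cast h0) (by simp), one_mul]
  · intro M hM
    refine exists_extendSubgroup_eq M fun h => hM ?_
    simp only [h, invPow_zero_left s.succ_ne_zero]

lemma subgroupZeta_int_pow (n : ℕ) :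
    subgroupZeta (Fin n → ℤ) (n + 1) = ∏ k ∈ Finset.range n, natZeta (k + 2) := by
  induction n with
  | zero => simp [subgroupZeta_of_subsingleton]
  | succ n ih =>
    let e : (Fin n → ℤ) × ℤ ≃+ (Fin (n + 1) → ℤ) :=
      AddEquiv.prodComm.trans (Fin.consLinearEquiv ℤ fun _ => ℤ).toAddEquiv
    rw [← subgroupZeta_congr e, subgroupZeta_prod_int n.succ_ne_zero, ih,
      Finset.prod_range_succ, mul_comm]

lemma nonempty_addEquiv_of_index_ne_zero {n : ℕ} (K : AddSubgroup (Fin n → ℤ))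
    (hK : K.index ≠ 0) : Nonempty (K ≃+ (Fin n → ℤ)) := by
  have : K.FiniteIndex := ⟨hK⟩
  have h := AddSubgroup.finrank_eq_of_finiteIndex K
  have : Module.Free ℤ K := inferInstanceAs (Module.Free ℤ K.toIntSubmodule)
  have : Module.Finite ℤ K := inferInstanceAs (Module.Finite ℤ K.toIntSubmodule)
  exact ⟨(LinearEquiv.ofFinrankEq K (Fin n → ℤ) h).toAddEquiv⟩

end SubgroupZeta

section Surjections

variable {A : Type*} [AddCommGroup A]

lemma nSur_eq_card_mul_card_addAut (A H : Type*) [AddCommGroup A] [AddCommGroup H] :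
    nSur A H = Nat.card {L : AddSubgroup A // Nonempty (A ⧸ L ≃+ H)} * Nat.card (AddAut H) := by
  rw [nSur, ← Nat.card_prod]
  let e (L : {L : AddSubgroup A // Nonempty (A ⧸ L ≃+ H)}) : A ⧸ L.1 ≃+ H := L.2.some
  let F (x : {L : AddSubgroup A // Nonempty (A ⧸ L ≃+ H)} × (H ≃+ H)) :
      {f : A →+ H // Function.Surjective f} :=
    ⟨((e x.1).trans x.2).toAddMonoidHom.comp (QuotientAddGroup.mk' x.1.1),
      ((e x.1).trans x.2).surjective.comp QuotientAddGroup.mk_surjective⟩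
  have hF (x) (a : A) : (F x).1 a = x.2 (e x.1 (a : A ⧸ x.1.1)) := rfl
  refine (Nat.card_congr (Equiv.ofBijective F ⟨?_, ?_⟩)).symm
  · rintro ⟨L, α⟩ ⟨L', α'⟩ h
    have h' (a : A) : α (e L (a : A ⧸ L.1)) = α' (e L' (a : A ⧸ L'.1)) := by
      rw [← hF (L, α), ← hF (L', α'), h]
    have hL : L = L' := by
      ext a
      rw [← QuotientAddGroup.eq_zero_iff, ← QuotientAddGroup.eq_zero_iff,
        ← (e L).map_eq_zero_iff, ← α.map_eq_zero_iff, h', α'.map_eq_zero_iff,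
        (e L').map_eq_zero_iff]
    subst hL
    congr 1
    ext y
    obtain ⟨q, rfl⟩ := (e L).surjective y
    obtain ⟨a, rfl⟩ := QuotientAddGroup.mk_surjective q
    exact h' a
  · rintro ⟨f, hf⟩
    let q := QuotientAddGroup.quotientKerEquivOfSurjective f hf
    refine ⟨(⟨f.ker, ⟨q⟩⟩, (e ⟨f.ker, ⟨q⟩⟩).symm.trans q),
      Subtype.ext (AddMonoidHom.ext fun a => ?_)⟩
    rw [hF, AddEquiv.trans_apply, AddEquiv.symm_apply_apply]
    rfl

lemma nSur_congr_left {A B : Type*} [AddCommGroup A] [AddCommGroup B] (e : A ≃+ B)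
    (G : Type*) [AddCommGroup G] : nSur A G = nSur B G :=
  Nat.card_congr <| e.addMonoidHomCongrLeftEquiv.subtypeEquiv fun f =>
    (EquivLike.surjective_comp e.symm f).symm

lemma nSur_quotient (L : AddSubgroup A) (G : Type*) [AddCommGroup G] :
    nSur (A ⧸ L) G =
      Nat.card {f : {f : A →+ G // Function.Surjective f} // L ≤ f.1.ker} := by
  let F (g : {g : A ⧸ L →+ G // Function.Surjective g}) :
      {f : {f : A →+ G // Function.Surjective f} // L ≤ f.1.ker} :=
    ⟨⟨g.1.comp (QuotientAddGroup.mk' L), g.2.comp QuotientAddGroup.mk_surjective⟩,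
      fun a ha => by simp [AddMonoidHom.mem_ker, (QuotientAddGroup.eq_zero_iff a).2 ha]⟩
  refine Nat.card_congr (Equiv.ofBijective F ⟨fun g g' h => ?_, fun f => ?_⟩)
  · exact Subtype.ext (QuotientAddGroup.addMonoidHom_ext _
      (congrArg (fun f => f.1.1) h))
  · exact ⟨⟨QuotientAddGroup.lift L f.1.1 f.2, fun y => by
      obtain ⟨a, rfl⟩ := f.1.2 y
      exact ⟨(a : A ⧸ L), rfl⟩⟩, rfl⟩

/-- Homomorphisms from `ℤⁿ` are tuples. -/
def intPowHomEquiv (n : ℕ) (H : Type*) [AddCommGroup H] : ((Fin n → ℤ) →+ H) ≃ (Fin n → H) :=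
  ((addMonoidHomLequivInt ℤ).trans ((Pi.basisFun ℤ (Fin n)).constr ℤ).symm).toEquiv

instance finite_intPow_hom (n : ℕ) (H : Type*) [AddCommGroup H] [Finite H] :
    Finite ((Fin n → ℤ) →+ H) :=
  Finite.of_equiv _ (intPowHomEquiv n H).symm

lemma card_intPow_hom (n : ℕ) (H : Type*) [AddCommGroup H] :
    Nat.card ((Fin n → ℤ) →+ H) = Nat.card H ^ n := by
  rw [Nat.card_congr (intPowHomEquiv n H), Nat.card_fun, Nat.card_fin]

lemma nSur_intPow_le (n : ℕ) (H : Type*) [AddCommGroup H] [Finite H] :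
    nSur (Fin n → ℤ) H ≤ Nat.card H ^ n :=
  (Nat.card_le_card_of_injective _ Subtype.val_injective).trans_eq (card_intPow_hom n H)

lemma card_pow_le_nSur_add (n : ℕ) (H : Type*) [AddCommGroup H] [Finite H]
    [Fintype {M : AddSubgroup H // M ≠ ⊤}] :
    Nat.card H ^ n ≤ nSur (Fin n → ℤ) H +
      ∑ M : {M : AddSubgroup H // M ≠ ⊤}, Nat.card M.1 ^ n := by
  simp only [← card_intPow_hom]
  rw [← Nat.card_sigma, nSur, ← Nat.card_sum]
  refine Nat.card_le_card_of_surjective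
    (Sum.elim Subtype.val fun x : (M : {M : AddSubgroup H // M ≠ ⊤}) × ((Fin n → ℤ) →+ M.1) =>
      x.1.1.subtype.comp x.2) fun f => ?_
  by_cases hf : Function.Surjective f
  · exact ⟨.inl ⟨f, hf⟩, rfl⟩
  · exact ⟨.inr ⟨⟨f.range, fun h => hf (AddMonoidHom.range_eq_top.1 h)⟩, f.rangeRestrict⟩, rfl⟩

/-- A uniformly random tuple of elements of a finite group generates it with probability tending
to `1` as the length of the tuple grows. -/
lemma tendsto_nSur_intPow_div (H : Type*) [AddCommGroup H] [Finite H] :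
    Tendsto (fun n => (nSur (Fin n → ℤ) H : ℝ≥0∞) * (Nat.card H : ℝ≥0∞)⁻¹ ^ n) atTop (𝓝 1) := by
  have := Fintype.ofFinite {M : AddSubgroup H // M ≠ ⊤}
  have hpos : (0 : ℝ) < Nat.card H := by exact_mod_cast Nat.card_pos
  have hreal :
      Tendsto (fun n => (nSur (Fin n → ℤ) H : ℝ) * (Nat.card H : ℝ)⁻¹ ^ n) atTop (𝓝 1) := by
    have hlim : Tendsto (fun n => 1 - ∑ M : {M : AddSubgroup H // M ≠ ⊤},
        ((Nat.card M.1 : ℝ) * (Nat.card H : ℝ)⁻¹) ^ n) atTop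
        (𝓝 (1 - ∑ _M : {M : AddSubgroup H // M ≠ ⊤}, 0)) := by
      refine tendsto_const_nhds.sub (tendsto_finsetSum _ fun M _ => ?_)
      refine tendsto_pow_atTop_nhds_zero_of_lt_one (by positivity) ?_
      rw [← div_eq_mul_inv, div_lt_one hpos, Nat.cast_lt]
      exact lt_of_le_of_ne (AddSubgroup.card_le_card_addGroup M.1)
        fun h => M.2 (AddSubgroup.eq_top_of_card_eq M.1 h)
    rw [Finset.sum_const_zero, sub_zero] at hlim
    refine tendsto_of_tendsto_of_tendsto_of_le_of_le hlim tendsto_const_nhds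
      (fun n => ?_) fun n => ?_
    · have h := Nat.cast_le (α := ℝ).2 (card_pow_le_nSur_add n H)
      rw [Nat.cast_pow] at h
      have h2 := mul_le_mul_of_nonneg_right h (by positivity : 0 ≤ (Nat.card H : ℝ)⁻¹ ^ n)
      rw [← mul_pow, mul_inv_cancel₀ hpos.ne', one_pow] at h2
      push_cast at h2
      simp only [add_mul, Finset.sum_mul, ← mul_pow] at h2
      simp only [tsub_le_iff_right]
      exact h2
    · have h : (nSur (Fin n → ℤ) H : ℝ) ≤ (Nat.card H : ℝ) ^ n := by
        exact_mod_cast nSur_intPow_le n H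
      simp only [inv_pow, ← div_eq_mul_inv]
      exact div_le_one_of_le₀ h (by positivity)
  have h := (ENNReal.continuous_ofReal.tendsto _).comp hreal
  rw [ENNReal.ofReal_one] at h
  refine h.congr fun n => ?_
  rw [Function.comp_apply, ENNReal.ofReal_mul (by positivity), ENNReal.ofReal_pow (by positivity),
    ENNReal.ofReal_inv_of_pos hpos, ENNReal.ofReal_natCast, ENNReal.ofReal_natCast]

lemma nSur_intPow_mul_le_one (n : ℕ) (H : Type*) [AddCommGroup H] [Finite H] :
    (nSur (Fin n → ℤ) H : ℝ≥0∞) * (Nat.card H : ℝ≥0∞)⁻¹ ^ n ≤ 1 := by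
  rw [← ENNReal.inv_pow, ← div_eq_mul_inv]
  refine ENNReal.div_le_of_le_mul ?_
  rw [one_mul]
  exact_mod_cast nSur_intPow_le n H

end Surjections

section Counting

lemma tsum_nSur_quotient {A : Type*} [AddCommGroup A] (G : Type*) [AddCommGroup G]
    [Finite (A →+ G)] (s : ℕ) :
    ∑' L : AddSubgroup A, (nSur (A ⧸ L) G : ℝ≥0∞) * invPow L.index s =
      ∑' f : {f : A →+ G // Function.Surjective f},
        ∑' L : {L : AddSubgroup A // L ≤ f.1.ker}, invPow L.1.index s := by
  have h1 (f : {f : A →+ G // Function.Surjective f}) :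
      ∑' L : {L : AddSubgroup A // L ≤ f.1.ker}, invPow L.1.index s =
        ∑' L : AddSubgroup A, {L | L ≤ f.1.ker}.indicator (fun L => invPow L.index s) L :=
    tsum_subtype {L : AddSubgroup A | L ≤ f.1.ker} fun L => invPow L.index s
  simp only [h1]
  rw [ENNReal.tsum_comm]
  refine tsum_congr fun L => ?_
  have h2 : ∑' f : {f : A →+ G // Function.Surjective f},
      {L | L ≤ f.1.ker}.indicator (fun L => invPow L.index s) L =
      ∑' _f : {f : {f : A →+ G // Function.Surjective f} // L ≤ f.1.ker}, invPow L.index s :=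
    (tsum_subtype {f : {f : A →+ G // Function.Surjective f} | L ≤ f.1.ker}
      fun _ => invPow L.index s).symm
  rw [h2, ENNReal.tsum_const, ENat.card_eq_coe_natCard, nSur_quotient]
  simp

variable {ι : Type} {Hrep : ι → Type} [∀ i, AddCommGroup (Hrep i)] [∀ i, Finite (Hrep i)]

/-- Summing over isomorphism classes of quotients amounts to summing over subgroups. -/
lemma tsum_reps_eq_tsum_subgroup
    (hirr : ∀ i j : ι, Nonempty (Hrep i ≃+ Hrep j) → i = j)
    (hcompl : ∀ (H : Type) [AddCommGroup H] [Finite H], ∃ i, Nonempty (Hrep i ≃+ H))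
    {A : Type} [AddCommGroup A] [∀ i, Finite (A →+ Hrep i)] (G : Type*) [AddCommGroup G]
    {s : ℕ} (hs : s ≠ 0) :
    ∑' i, (nSur A (Hrep i) : ℝ≥0∞) * (Nat.card (AddAut (Hrep i)) : ℝ≥0∞)⁻¹ *
        (nSur (Hrep i) G * invPow (Nat.card (Hrep i)) s) =
      ∑' L : AddSubgroup A, (nSur (A ⧸ L) G : ℝ≥0∞) * invPow L.index s := by
  have hinj : Function.Injective
      fun x : (i : ι) × {L : AddSubgroup A // Nonempty (A ⧸ L ≃+ Hrep i)} => x.2.1 := by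
    rintro ⟨i, L, ⟨e⟩⟩ ⟨j, L', ⟨e'⟩⟩ h
    dsimp only at h
    subst h
    obtain rfl := hirr i j ⟨e.symm.trans e'⟩
    rfl
  rw [← hinj.tsum_eq, ENNReal.tsum_sigma']
  · refine tsum_congr fun i => ?_
    have hA : Nat.card (AddAut (Hrep i)) ≠ 0 := by
      have : Finite (AddAut (Hrep i)) := inferInstanceAs (Finite (Hrep i ≃+ Hrep i))
      exact Nat.card_pos.ne'
    have hfin : Finite {L : AddSubgroup A // Nonempty (A ⧸ L ≃+ Hrep i)} :=
      (Set.finite_range fun f : A →+ Hrep i => f.ker).subset fun L ⟨e⟩ =>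
        ⟨e.toAddMonoidHom.comp (QuotientAddGroup.mk' L), by ext a; simp⟩
    have hL (L : {L : AddSubgroup A // Nonempty (A ⧸ L ≃+ Hrep i)}) :
        (nSur (A ⧸ L.1) G : ℝ≥0∞) * invPow L.1.index s =
          nSur (Hrep i) G * invPow (Nat.card (Hrep i)) s := by
      obtain ⟨e⟩ := L.2
      rw [nSur_congr_left e, AddSubgroup.index_eq_card, Nat.card_congr e.toEquiv]
    simp only [hL, ENNReal.tsum_const]
    rw [ENat.card_eq_coe_natCard, nSur_eq_card_mul_card_addAut A (Hrep i), Nat.cast_mul,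
      mul_assoc (Nat.card _ : ℝ≥0∞), ENNReal.mul_inv_cancel (by exact_mod_cast hA) (by simp)]
    simp
  · intro L hL
    have h0 : L.index ≠ 0 := fun h => hL (by simp only [h, invPow_zero_left hs, mul_zero])
    have : L.FiniteIndex := ⟨h0⟩
    have : Finite (A ⧸ L) := AddSubgroup.finite_quotient_of_finiteIndex (H := L)
    obtain ⟨i, ⟨e⟩⟩ := hcompl (A ⧸ L)
    exact ⟨⟨i, L, ⟨e.symm⟩⟩, rfl⟩

lemma tsum_reps_intPow
    (hirr : ∀ i j : ι, Nonempty (Hrep i ≃+ Hrep j) → i = j)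
    (hcompl : ∀ (H : Type) [AddCommGroup H] [Finite H], ∃ i, Nonempty (Hrep i ≃+ H))
    (G : Type*) [AddCommGroup G] [Finite G] (n : ℕ) :
    ∑' i, (nSur (Fin n → ℤ) (Hrep i) : ℝ≥0∞) * (Nat.card (AddAut (Hrep i)) : ℝ≥0∞)⁻¹ *
        (nSur (Hrep i) G * invPow (Nat.card (Hrep i)) (n + 1)) =
      nSur (Fin n → ℤ) G * (invPow (Nat.card G) (n + 1) *
        ∏ k ∈ Finset.range n, natZeta (k + 2)) := by
  rw [tsum_reps_eq_tsum_subgroup hirr hcompl G n.succ_ne_zero, tsum_nSur_quotient]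
  have h (f : {f : (Fin n → ℤ) →+ G // Function.Surjective f}) :
      ∑' L : {L : AddSubgroup (Fin n → ℤ) // L ≤ f.1.ker}, invPow L.1.index (n + 1) =
        invPow (Nat.card G) (n + 1) * ∏ k ∈ Finset.range n, natZeta (k + 2) := by
    have hidx : f.1.ker.index = Nat.card G := by
      rw [AddSubgroup.index_ker, AddMonoidHom.range_eq_top.2 f.2, AddSubgroup.card_top]
    obtain ⟨e⟩ := nonempty_addEquiv_of_index_ne_zero f.1.ker (by rw [hidx]; exact Nat.card_pos.ne')
    rw [tsum_le_invPow_index, hidx, subgroupZeta_congr e, subgroupZeta_int_pow]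
  simp only [h, ENNReal.tsum_const]
  rw [ENat.card_eq_coe_natCard, nSur]
  simp

/-- A dominated convergence criterion for weights tending to `1` from below. -/
lemma ENNReal.tsum_eq_of_tendsto_one {ι : Type*} {c : ι → ℝ≥0∞} {r : ℕ → ι → ℝ≥0∞} {R : ℝ≥0∞}
    (hr : ∀ n i, r n i ≤ 1) (hlim : ∀ i, Tendsto (r · i) atTop (𝓝 1))
    (hR : Tendsto (fun n => ∑' i, r n i * c i) atTop (𝓝 R)) : ∑' i, c i = R := by
  refine le_antisymm ?_ (le_of_tendsto' hR fun n => ENNReal.tsum_le_tsum fun i =>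
    mul_le_of_le_one_left' (hr n i))
  rw [ENNReal.tsum_eq_iSup_sum]
  refine iSup_le fun F => le_of_tendsto_of_tendsto' ?_ hR fun n => ENNReal.sum_le_tsum F
  refine tendsto_finsetSum _ fun i _ => ?_
  simpa using ENNReal.Tendsto.mul_const (hlim i) (Or.inl one_ne_zero)

lemma tsum_reps_eq
    (hirr : ∀ i j : ι, Nonempty (Hrep i ≃+ Hrep j) → i = j)
    (hcompl : ∀ (H : Type) [AddCommGroup H] [Finite H], ∃ i, Nonempty (Hrep i ≃+ H))
    (G : Type*) [AddCommGroup G] [Finite G] :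
    ∑' i, (Nat.card (Hrep i) : ℝ≥0∞)⁻¹ * (Nat.card (AddAut (Hrep i)) : ℝ≥0∞)⁻¹ *
        (nSur (Hrep i) G : ℝ≥0∞) =
      (Nat.card G : ℝ≥0∞)⁻¹ * ENNReal.ofReal Qconst⁻¹ := by
  refine ENNReal.tsum_eq_of_tendsto_one
    (fun n i => nSur_intPow_mul_le_one n (Hrep i)) (fun i => tendsto_nSur_intPow_div (Hrep i)) ?_
  have hG : (Nat.card G : ℝ≥0∞)⁻¹ ≠ ∞ := by simp [Nat.card_pos.ne']
  have hlim := ENNReal.Tendsto.mul (tendsto_nSur_intPow_div G) (Or.inl one_ne_zero)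
    (ENNReal.Tendsto.const_mul tendsto_prod_natZeta (Or.inr hG))
    (Or.inr ENNReal.one_ne_top)
  rw [one_mul] at hlim
  refine hlim.congr fun n => ?_
  have h := tsum_reps_intPow hirr hcompl G n
  rw [invPow_of_ne_zero Nat.card_pos.ne', pow_succ] at h
  rw [mul_assoc, ← mul_assoc (_ ^ n), ← h]
  refine tsum_congr fun i => ?_
  rw [invPow_of_ne_zero Nat.card_pos.ne', pow_succ]
  ring

end Counting

/-- For the Cohen–Lenstra distribution `Y`, with `P(Y ≅ H) = Q/(|H||Aut H|)`, and any finite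
abelian group `G`, one has `E[#Sur(Y, G)] = ∑_H Q/(|H||Aut H|) ⬝ #Sur(H, G) = 1/|G|`, the
sum running over a complete irredundant system `Hrep : ι → Type` of representatives of the
isomorphism classes of finite abelian groups. -/
theorem expected_surjections_cohen_lenstra
    (ι : Type) (Hrep : ι → Type) [∀ i, AddCommGroup (Hrep i)] [∀ i, Finite (Hrep i)]
    (hirr : ∀ i j : ι, Nonempty (Hrep i ≃+ Hrep j) → i = j)
    (hcompl : ∀ (H : Type) [AddCommGroup H] [Finite H], ∃ i, Nonempty (Hrep i ≃+ H))
    (G : Type*) [AddCommGroup G] [Finite G] :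
    HasSum
      (fun i => Qconst / ((Nat.card (Hrep i) : ℝ) * (Nat.card (AddAut (Hrep i)) : ℝ)) *
        (nSur (Hrep i) G : ℝ))
      (1 / (Nat.card G : ℝ)) := by
  have h := tsum_reps_eq hirr hcompl G
  have htop : (Nat.card G : ℝ≥0∞)⁻¹ * ENNReal.ofReal Qconst⁻¹ ≠ ∞ :=
    ENNReal.mul_ne_top (by simp [Nat.card_pos.ne']) ENNReal.ofReal_ne_top
  have hne := ENNReal.ne_top_of_tsum_ne_top (h ▸ htop)
  have hsum := (ENNReal.hasSum_toReal (h ▸ htop)).mul_left Qconst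
  rw [← ENNReal.tsum_toReal_eq hne, h,
    ENNReal.toReal_mul, ENNReal.toReal_ofReal (inv_nonneg.2 Qconst_nonneg), mul_left_comm,
    mul_inv_cancel₀ Qconst_ne_zero] at hsum
  have hval : (Nat.card G : ℝ≥0∞)⁻¹.toReal * 1 = 1 / (Nat.card G : ℝ) := by simp
  rw [hval] at hsum
  have hterm : (fun i => Qconst / ((Nat.card (Hrep i) : ℝ) * (Nat.card (AddAut (Hrep i)) : ℝ)) *
      (nSur (Hrep i) G : ℝ)) = fun i => Qconst * ((Nat.card (Hrep i) : ℝ≥0∞)⁻¹ *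
        (Nat.card (AddAut (Hrep i)) : ℝ≥0∞)⁻¹ * (nSur (Hrep i) G : ℝ≥0∞)).toReal := by
    funext i
    simp [div_eq_mul_inv, mul_comm, mul_left_comm]
  rw [hterm]
  exact hsum

end
end
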